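/- For every integer n ≥ 3, I(n+1) − I(n) > √(6/π) · 3/(20 n (n+1)) − 4 · (1.1)^{−n} − 0.50344 · n^{−5/2} − 10 e^{−n/6}, where I(n) = (2√n/π) ∫₀^∞ ((sin t)/t)^n dt. -/

import Mathlib

open MeasureTheory Real

/-- `I n = (2√n/π) ∫₀^∞ ((sin t)/t)^n dt`. -/
noncomputable def I (n : ℕ) : ℝ :=
  2 * Real.sqrt n / Real.pi * ∫ t in Set.Ioi (0 : ℝ), (Real.sin t / t) ^ n

/-!
Substituting `t = s / √n` turns `√n ∫₀^π sinc ^ n` into the integral of `sinc (s / √n) ^ n` over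
`[0, π √n]`. By Euler's product, `sinc (s / √n) ^ n` is the product over `j ≥ 1` of
`(1 - u / n) ^ n` with `u = (s / (π j)) ^ 2`. Concavity of `log (1 - v) + v ^ 2 / 2` shows that
passing from `m` to `n ≥ m` multiplies each factor by at least `exp (u ^ 2 / 2 * (1 / m - 1 / n))`,
and since `ζ(4) = π ^ 4 / 90` the whole product grows by at least
`exp (s ^ 4 / 180 * (1 / m - 1 / n))`. Comparing the resulting fourth moment of `sinc (s / √n) ^ n`
with that of the Gaussian `exp (-s ^ 2 / 6)` gives the main term; the tail over `t > π` is
`O(π ^ (-n))` because `|sinc t| ≤ 1 / t`.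
-/

section ScaledPowers

lemma concaveOn_log_one_sub_add_sq_div_two :
    ConcaveOn ℝ (Set.Ico 0 1) fun v : ℝ => log (1 - v) + v ^ 2 / 2 := by
  have hderiv : ∀ v < (1 : ℝ),
      HasDerivAt (fun v => log (1 - v) + v ^ 2 / 2) (-(1 - v)⁻¹ + v) v := fun v hv => by
    convert! (((hasDerivAt_id v).const_sub 1).log (sub_pos.2 hv).ne').add
      ((hasDerivAt_pow 2 v).div_const 2) using 1
    norm_num
    ring
  have hderiv2 : ∀ v < (1 : ℝ),
      HasDerivAt (fun v => -(1 - v)⁻¹ + v) (-(1 / (1 - v) ^ 2) + 1) v := fun v hv => by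
    convert! (((hasDerivAt_id v).const_sub 1).inv (sub_pos.2 hv).ne').neg.add
      (hasDerivAt_id v) using 1
    simp
  refine concaveOn_of_hasDerivWithinAt2_nonpos (convex_Ico 0 1)
    (fun v hv => (hderiv v hv.2).continuousAt.continuousWithinAt)
    (f' := fun v => -(1 - v)⁻¹ + v) (f'' := fun v => -(1 / (1 - v) ^ 2) + 1) ?_ ?_ ?_ <;>
    rw [interior_Ico] <;> rintro v ⟨hv0, hv1⟩
  · exact (hderiv v hv1).hasDerivWithinAt
  · exact (hderiv2 v hv1).hasDerivWithinAt
  · have : 1 ≤ 1 / (1 - v) ^ 2 := by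
      rw [one_le_div (pow_pos (sub_pos.2 hv1) 2)]
      exact pow_le_one₀ (sub_nonneg.2 hv1.le) (by linarith)
    linarith

variable {a b : ℝ}

lemma mul_log_one_sub_div_add_le (ha : 0 < a) (hab : a ≤ b) {u : ℝ} (hu : 0 ≤ u) (hua : u < a) :
    a * log (1 - u / a) + u ^ 2 / 2 * (1 / a - 1 / b) ≤ b * log (1 - u / b) := by
  have hb : 0 < b := ha.trans_le hab
  have hconc := concaveOn_log_one_sub_add_sq_div_two.2
    (show u / a ∈ Set.Ico 0 1 from ⟨by positivity, (div_lt_one ha).2 hua⟩)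
    (show (0 : ℝ) ∈ Set.Ico 0 1 by simp) (show 0 ≤ a / b by positivity)
    (show 0 ≤ 1 - a / b from sub_nonneg.2 ((div_le_one hb).2 hab)) (by ring)
  have hmid : a / b * (u / a) = u / b := by field_simp
  simp only [smul_eq_mul, hmid, mul_zero, add_zero, sub_zero, log_one, ne_eq, OfNat.ofNat_ne_zero,
    not_false_eq_true, zero_pow, zero_div] at hconc
  have hscaled := mul_le_mul_of_nonneg_left hconc hb.le
  have hlhs : b * (a / b * (log (1 - u / a) + (u / a) ^ 2 / 2)) =
      a * log (1 - u / a) + u ^ 2 / 2 * (1 / a) := by field_simp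
  have hrhs : b * (log (1 - u / b) + (u / b) ^ 2 / 2) =
      b * log (1 - u / b) + u ^ 2 / 2 * (1 / b) := by field_simp
  linarith

lemma one_sub_div_rpow_mul_exp_le (ha : 0 < a) (hab : a ≤ b) {u : ℝ} (hu : 0 ≤ u) (hua : u ≤ a) :
    (1 - u / a) ^ a * exp (u ^ 2 / 2 * (1 / a - 1 / b)) ≤ (1 - u / b) ^ b := by
  have hb : 0 < b := ha.trans_le hab
  rcases hua.eq_or_lt with rfl | hua
  · rw [div_self ha.ne', sub_self, zero_rpow ha.ne', zero_mul]
    exact rpow_nonneg (sub_nonneg.2 ((div_le_one hb).2 hab)) b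
  · rw [rpow_def_of_pos (sub_pos.2 ((div_lt_one ha).2 hua)),
      rpow_def_of_pos (sub_pos.2 ((div_lt_one hb).2 (hua.trans_le hab))), ← exp_add]
    gcongr
    linarith [mul_log_one_sub_div_add_le ha hab hu hua]

lemma tendsto_prod_one_sub_sq_sinc (x : ℝ) :
    Filter.Tendsto (fun N => ∏ j ∈ Finset.range N, (1 - (x / (π * (j + 1))) ^ 2)) Filter.atTop
      (nhds (sinc x)) := by
  rcases eq_or_ne x 0 with rfl | hx
  · simp
  · have h := (tendsto_euler_sin_prod (x / π)).div_const x
    rw [mul_div_cancel₀ _ pi_ne_zero, ← sinc_of_ne_zero hx] at h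
    refine h.congr fun N => ?_
    rw [mul_div_cancel_left₀ _ hx]
    exact Finset.prod_congr rfl fun j _ => by rw [← div_pow, div_div]

lemma hasSum_div_pi_mul_succ_pow_four (s : ℝ) :
    HasSum (fun j : ℕ => (s / (π * (j + 1))) ^ 4) (s ^ 4 / 90) := by
  have h := ((hasSum_nat_add_iff' 1).2 hasSum_zeta_four).mul_left ((s / π) ^ 4)
  convert! h using 1
  · ext j
    push_cast
    rw [mul_one_div, ← div_pow, div_div]
  · rw [Finset.sum_range_one, Nat.cast_zero, zero_pow four_ne_zero, div_zero, sub_zero]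
    field_simp

theorem sinc_div_sqrt_rpow_mul_exp_le (ha : 0 < a) (hab : a ≤ b) {s : ℝ} (hs : s ^ 2 ≤ π ^ 2 * a) :
    sinc (s / √a) ^ a * exp (s ^ 4 / 180 * (1 / a - 1 / b)) ≤ sinc (s / √b) ^ b := by
  set u : ℕ → ℝ := fun j => (s / (π * (j + 1))) ^ 2 with hu
  have hua : ∀ j, u j ≤ a := fun j => by
    change (s / (π * (j + 1))) ^ 2 ≤ a
    rw [div_pow, div_le_iff₀ (by positivity), mul_pow, mul_comm a]
    refine hs.trans ?_
    gcongr
    exact le_mul_of_one_le_right (by positivity) (one_le_pow₀ (by simp))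
  have hfactor : ∀ c, a ≤ c → ∀ j, 0 ≤ 1 - u j / c := fun c hc j =>
    sub_nonneg.2 ((div_le_one (ha.trans_le hc)).2 ((hua j).trans hc))
  have hprod : ∀ c, a ≤ c → Filter.Tendsto
      (fun N => ∏ j ∈ Finset.range N, (1 - u j / c) ^ c) Filter.atTop
      (nhds (sinc (s / √c) ^ c)) := fun c hc => by
    have hc0 : 0 < c := ha.trans_le hc
    refine ((tendsto_prod_one_sub_sq_sinc (s / √c)).rpow_const (Or.inr hc0.le)).congr fun N => ?_
    rw [finsetProd_rpow _ _ fun j _ => hfactor c hc j]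
    congr! 3 with j
    rw [hu, div_right_comm, div_pow _ (√c), sq_sqrt hc0.le]
  have hexp : Filter.Tendsto
      (fun N => ∏ j ∈ Finset.range N, exp (u j ^ 2 / 2 * (1 / a - 1 / b))) Filter.atTop
      (nhds (exp (s ^ 4 / 180 * (1 / a - 1 / b)))) := by
    simp only [← exp_sum]
    refine (continuous_exp.tendsto _).comp ?_
    convert! ((hasSum_div_pi_mul_succ_pow_four s).mul_right
      (1 / 2 * (1 / a - 1 / b))).tendsto_sum_nat using 2
    · exact Finset.sum_congr rfl fun j _ => by rw [hu]; ring
    · ring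
  refine le_of_tendsto_of_tendsto' ((hprod a le_rfl).mul hexp) (hprod b hab) fun N => ?_
  rw [← Finset.prod_mul_distrib]
  exact Finset.prod_le_prod
    (fun j _ => mul_nonneg (rpow_nonneg (hfactor a le_rfl j) a) (exp_pos _).le)
    (fun j _ => one_sub_div_rpow_mul_exp_le ha hab (sq_nonneg _) (hua j))

end ScaledPowers

section PointwiseBounds

lemma sinc_nonneg_of_nonneg_of_le_pi {x : ℝ} (hx0 : 0 ≤ x) (hxπ : x ≤ π) : 0 ≤ sinc x := by
  rw [sinc_apply]
  split_ifs
  · exact zero_le_one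
  · exact div_nonneg (sin_nonneg_of_nonneg_of_le_pi hx0 hxπ) hx0

lemma one_sub_sq_div_six_le_sinc {x : ℝ} (hx : 0 ≤ x) : 1 - x ^ 2 / 6 ≤ sinc x := by
  rcases hx.eq_or_lt with rfl | hx
  · simp
  · rw [sinc_of_ne_zero hx.ne', le_div_iff₀ hx]
    linarith [sin_gt_sub_cube hx]

lemma abs_sinc_le_inv {t : ℝ} (ht : 0 < t) : |sinc t| ≤ t⁻¹ := by
  rw [sinc_of_ne_zero ht.ne', abs_div, abs_of_pos ht, div_eq_mul_inv]
  exact mul_le_of_le_one_left (by positivity) (abs_sin_le_one t)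

lemma one_sub_sq_div_mul_exp_neg_le_one_sub_div_pow {n : ℕ} {t : ℝ} (ht : |t| ≤ n) :
    (1 - t ^ 2 / n) * exp (-t) ≤ (1 - t / n) ^ n := by
  obtain ⟨htl, htr⟩ := abs_le.1 ht
  have hsub : 0 ≤ 1 - t / n := sub_nonneg.2 (div_le_one_of_le₀ htr (Nat.cast_nonneg n))
  have hsq : (t / n) ^ 2 ≤ 1 := by
    rw [sq_le_one_iff_abs_le_one, abs_div, Nat.abs_cast]
    exact div_le_one_of_le₀ ht (Nat.cast_nonneg n)
  have hexp : (1 + t / n) ^ n ≤ exp t := by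
    simpa [neg_div] using one_sub_div_pow_le_exp_neg (n := n) (t := -t) (by linarith)
  have hbernoulli : 1 - t ^ 2 / n ≤ (1 - (t / n) ^ 2) ^ n := by
    have h := one_add_mul_le_pow (show -2 ≤ -(t / n) ^ 2 by linarith) n
    rcases n.eq_zero_or_pos with rfl | hn
    · simp
    · convert! h using 1
      field_simp
      ring
  rw [exp_neg, ← div_eq_mul_inv, div_le_iff₀ (exp_pos t)]
  calc 1 - t ^ 2 / n ≤ (1 - (t / n) ^ 2) ^ n := hbernoulli
    _ = (1 - t / n) ^ n * (1 + t / n) ^ n := by rw [← mul_pow]; ring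
    _ ≤ (1 - t / n) ^ n * exp t := by gcongr

variable {n : ℕ} {s : ℝ}

lemma sinc_div_sqrt_pow_nonneg (hs : 0 ≤ s) (hsn : s ≤ π * √n) : 0 ≤ sinc (s / √n) ^ n :=
  pow_nonneg (sinc_nonneg_of_nonneg_of_le_pi (by positivity)
    (div_le_of_le_mul₀ (sqrt_nonneg _) pi_nonneg hsn)) n

lemma one_sub_pow_four_div_nonpos (hn : 0 < n) (h : (n : ℝ) ≤ s ^ 2 / 6) :
    1 - s ^ 4 / (36 * n) ≤ 0 := by
  have hn1 : (1 : ℝ) ≤ n := by exact_mod_cast hn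
  rw [sub_nonpos, one_le_div (by positivity)]
  calc (36 * n : ℝ) ≤ 36 * n ^ 2 := by gcongr; exact le_self_pow₀ hn1 two_ne_zero
    _ ≤ 36 * (s ^ 2 / 6) ^ 2 := by gcongr
    _ = s ^ 4 := by ring

lemma one_sub_mul_gaussian_le_sinc_div_sqrt_pow (hn : 0 < n) (hs : 0 ≤ s) (hsn : s ≤ π * √n) :
    (1 - s ^ 4 / (36 * n)) * exp (-(1 / 6) * s ^ 2) ≤ sinc (s / √n) ^ n := by
  rcases le_total (s ^ 2 / 6) (n : ℝ) with h | h
  · calc (1 - s ^ 4 / (36 * n)) * exp (-(1 / 6) * s ^ 2)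
        = (1 - (s ^ 2 / 6) ^ 2 / n) * exp (-(s ^ 2 / 6)) := by
          congr 2 <;> ring
      _ ≤ (1 - s ^ 2 / 6 / n) ^ n :=
          one_sub_sq_div_mul_exp_neg_le_one_sub_div_pow (by rwa [abs_of_nonneg (by positivity)])
      _ ≤ sinc (s / √n) ^ n := by
          gcongr
          · exact sub_nonneg.2 ((div_le_one (by positivity)).2 h)
          · have hsinc := one_sub_sq_div_six_le_sinc (show 0 ≤ s / √n by positivity)
            rwa [div_pow, sq_sqrt n.cast_nonneg, div_right_comm] at hsinc
  · exact (mul_nonpos_of_nonpos_of_nonneg (one_sub_pow_four_div_nonpos hn h) (exp_pos _).le).trans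
      (sinc_div_sqrt_pow_nonneg hs hsn)

end PointwiseBounds

section GaussianMoments

variable {b : ℝ}

lemma integrableOn_pow_mul_gaussian (hb : 0 < b) (k : ℕ) :
    IntegrableOn (fun x : ℝ => x ^ k * exp (-b * x ^ 2)) (Set.Ioi 0) := by
  have hk : (-1 : ℝ) < k := neg_one_lt_zero.trans_le k.cast_nonneg
  simpa only [rpow_natCast] using integrableOn_rpow_mul_exp_neg_mul_sq hb hk

lemma integral_pow_two_mul_mul_gaussian (hb : 0 < b) (k : ℕ) :
    ∫ x in Set.Ioi (0 : ℝ), x ^ (2 * k) * exp (-b * x ^ 2) =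
      (2 * k - 1 : ℕ).doubleFactorial / (2 * b) ^ k * √(π / b) / 2 := by
  have hk : (-1 : ℝ) < (2 * k : ℕ) := neg_one_lt_zero.trans_le (Nat.cast_nonneg _)
  have h := integral_rpow_mul_exp_neg_mul_rpow two_pos hk hb
  simp only [rpow_natCast, rpow_ofNat] at h
  rw [h, show (((2 * k : ℕ) : ℝ) + 1) / 2 = k + 1 / 2 by push_cast; ring, Gamma_nat_add_half,
    neg_div, show (((2 * k : ℕ) : ℝ) + 1) / 2 = k + 1 / 2 by push_cast; ring,
    rpow_neg hb.le, rpow_add hb, ← sqrt_eq_rpow, rpow_natCast, sqrt_div pi_nonneg,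
    mul_pow]
  field_simp

lemma integrableOn_pow_four_mul_one_sub_mul_gaussian (hb : 0 < b) (c : ℝ) :
    IntegrableOn (fun x : ℝ => x ^ 4 * ((1 - x ^ 4 / c) * exp (-b * x ^ 2))) (Set.Ioi 0) := by
  refine ((integrableOn_pow_mul_gaussian hb 4).sub
    ((integrableOn_pow_mul_gaussian hb 8).div_const c)).congr_fun (fun x _ => ?_) measurableSet_Ioi
  simp only [Pi.sub_apply]
  ring

lemma integral_pow_four_mul_one_sub_mul_gaussian (hb : 0 < b) (c : ℝ) :
    ∫ x in Set.Ioi (0 : ℝ), x ^ 4 * ((1 - x ^ 4 / c) * exp (-b * x ^ 2)) =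
      3 / (2 * b) ^ 2 * √(π / b) / 2 * (1 - 35 / ((2 * b) ^ 2 * c)) := by
  calc _ = ∫ x in Set.Ioi (0 : ℝ), (x ^ (2 * 2) * exp (-b * x ^ 2) -
          x ^ (2 * 4) * exp (-b * x ^ 2) / c) := by
        congr! 2 with x
        ring
    _ = 3 / (2 * b) ^ 2 * √(π / b) / 2 - 105 / (2 * b) ^ 4 * √(π / b) / 2 / c := by
        rw [integral_sub (integrableOn_pow_mul_gaussian hb _)
          ((integrableOn_pow_mul_gaussian hb _).div_const c), integral_div,
          integral_pow_two_mul_mul_gaussian hb, integral_pow_two_mul_mul_gaussian hb]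
        norm_num [Nat.doubleFactorial]
    _ = _ := by
        field_simp
        ring

end GaussianMoments

lemma integral_Ioi_le_intervalIntegral {f g : ℝ → ℝ} {a b : ℝ} (hab : a ≤ b)
    (hf : IntegrableOn f (Set.Ioi a)) (hg : IntervalIntegrable g volume a b)
    (hfg : ∀ x ∈ Set.Icc a b, f x ≤ g x) (hf_nonpos : ∀ x, b < x → f x ≤ 0) :
    ∫ x in Set.Ioi a, f x ≤ ∫ x in a..b, g x := by
  have hfb : IntegrableOn f (Set.Ioi b) := hf.mono_set (Set.Ioi_subset_Ioi hab)
  have hfab : IntervalIntegrable f volume a b :=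
    (intervalIntegrable_iff_integrableOn_Ioc_of_le hab).2 (hf.mono_set Set.Ioc_subset_Ioi_self)
  rw [← intervalIntegral.integral_interval_add_Ioi hf hfb]
  linarith [setIntegral_nonpos (μ := volume) measurableSet_Ioi hf_nonpos,
    intervalIntegral.integral_mono_on hab hfab hg hfg]

section CentralIntegral

/-- The contribution of `[0, π]` to `√n * ∫₀^∞ sinc ^ n`, written in the variable `s = √n * t`,
in which the integrands for different `n` can be compared pointwise. -/
noncomputable def centralIntegral (n : ℕ) : ℝ :=
  ∫ s in (0)..(π * √n), sinc (s / √n) ^ n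

variable {m n : ℕ}

lemma sqrt_mul_integral_sinc_pow (hn : 0 < n) :
    √n * ∫ t in (0)..π, sinc t ^ n = centralIntegral n := by
  have hn' : √(n : ℝ) ≠ 0 := by positivity
  rw [centralIntegral, intervalIntegral.integral_comp_div (fun t => sinc t ^ n) hn', zero_div,
    mul_div_cancel_right₀ _ hn', smul_eq_mul]

lemma sinc_div_sqrt_pow_mul_le (hm : 0 < m) (hmn : m ≤ n) {s : ℝ} (hs : 0 ≤ s)
    (hsm : s ≤ π * √m) :
    sinc (s / √m) ^ m * (1 + s ^ 4 / 180 * (1 / m - 1 / n)) ≤ sinc (s / √n) ^ n := by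
  have hsq : s ^ 2 ≤ π ^ 2 * m := by
    rw [← sq_sqrt m.cast_nonneg, ← mul_pow]
    gcongr
  have hrpow := sinc_div_sqrt_rpow_mul_exp_le (Nat.cast_pos.2 hm) (Nat.cast_le.2 hmn) hsq
  simp only [rpow_natCast] at hrpow
  refine le_trans ?_ hrpow
  gcongr
  · exact sinc_div_sqrt_pow_nonneg hs hsm
  · linarith [add_one_le_exp (s ^ 4 / 180 * (1 / m - 1 / n : ℝ))]

theorem centralIntegral_add_le (hm : 0 < m) (hmn : m ≤ n) :
    centralIntegral m +
      (1 / m - 1 / n) / 180 * ∫ s in (0)..(π * √m), s ^ 4 * sinc (s / √m) ^ m ≤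
      centralIntegral n := by
  have hcont : ∀ k : ℕ, Continuous fun s : ℝ => sinc (s / √k) ^ k := fun k => by fun_prop
  have hle : π * √m ≤ π * √n := by gcongr
  calc _ = ∫ s in (0)..(π * √m), sinc (s / √m) ^ m * (1 + s ^ 4 / 180 * (1 / m - 1 / n)) := by
        rw [centralIntegral, ← intervalIntegral.integral_const_mul,
          ← intervalIntegral.integral_add ((hcont m).intervalIntegrable _ _)
            (Continuous.intervalIntegrable (by fun_prop) _ _)]
        congr! 2 with s
        ring
    _ ≤ ∫ s in (0)..(π * √m), sinc (s / √n) ^ n :=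
        intervalIntegral.integral_mono_on (by positivity)
          (Continuous.intervalIntegrable (by fun_prop) _ _) ((hcont n).intervalIntegrable _ _)
          fun s hs => sinc_div_sqrt_pow_mul_le hm hmn hs.1 hs.2
    _ ≤ centralIntegral n := by
        refine intervalIntegral.integral_mono_interval le_rfl (by positivity) hle ?_
          ((hcont n).intervalIntegrable _ _)
        filter_upwards [ae_restrict_mem measurableSet_Ioc] with s hs
        exact sinc_div_sqrt_pow_nonneg hs.1.le hs.2

theorem le_integral_pow_four_mul_sinc_div_sqrt_pow (hn : 0 < n) :
    27 / 2 * √(6 * π) * (1 - 35 / (4 * n)) ≤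
      ∫ s in (0)..(π * √n), s ^ 4 * sinc (s / √n) ^ n := by
  have hsixth : (0 : ℝ) < 1 / 6 := by norm_num
  calc 27 / 2 * √(6 * π) * (1 - 35 / (4 * n))
      = ∫ s in Set.Ioi (0 : ℝ), s ^ 4 * ((1 - s ^ 4 / (36 * n)) * exp (-(1 / 6) * s ^ 2)) := by
        rw [integral_pow_four_mul_one_sub_mul_gaussian hsixth, div_div_eq_mul_div, div_one,
          mul_comm π]
        field_simp
        ring
    _ ≤ ∫ s in (0)..(π * √n), s ^ 4 * sinc (s / √n) ^ n := by
        refine integral_Ioi_le_intervalIntegral (by positivity)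
          (integrableOn_pow_four_mul_one_sub_mul_gaussian hsixth _)
          (Continuous.intervalIntegrable (by fun_prop) _ _) (fun s hs => ?_) (fun s hs => ?_)
        · gcongr
          exact one_sub_mul_gaussian_le_sinc_div_sqrt_pow hn hs.1 hs.2
        · have hsq : π ^ 2 * n ≤ s ^ 2 := by
            rw [← sq_sqrt n.cast_nonneg, ← mul_pow]
            gcongr
          have hn6 : (n : ℝ) ≤ s ^ 2 / 6 := by
            have hpi : 6 ≤ π ^ 2 := by nlinarith [pi_gt_three]
            linarith [mul_le_mul_of_nonneg_right hpi (n.cast_nonneg (α := ℝ))]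
          exact mul_nonpos_of_nonneg_of_nonpos (by positivity)
            (mul_nonpos_of_nonpos_of_nonneg (one_sub_pow_four_div_nonpos hn hn6) (exp_pos _).le)

end CentralIntegral

section Tail

variable {n : ℕ} {c : ℝ}

lemma abs_sinc_pow_le_inv_pow (n : ℕ) {t : ℝ} (ht : 0 < t) : |sinc t ^ n| ≤ (t ^ n)⁻¹ := by
  rw [abs_pow, ← inv_pow]
  exact pow_le_pow_left₀ (abs_nonneg _) (abs_sinc_le_inv ht) n

lemma rpow_neg_natCast_eqOn_Ioi (hc : 0 < c) :
    Set.EqOn (fun t : ℝ => t ^ (-n : ℝ)) (fun t => (t ^ n)⁻¹) (Set.Ioi c) :=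
  fun t ht => by simp only [rpow_neg (hc.trans ht).le, rpow_natCast]

lemma integrableOn_Ioi_inv_pow (hn : 2 ≤ n) (hc : 0 < c) :
    IntegrableOn (fun t : ℝ => (t ^ n)⁻¹) (Set.Ioi c) := by
  have hn1 : (1 : ℝ) < n := by exact_mod_cast hn
  exact (integrableOn_Ioi_rpow_of_lt (neg_lt_neg hn1) hc).congr_fun
    (rpow_neg_natCast_eqOn_Ioi hc) measurableSet_Ioi

lemma integral_Ioi_inv_pow (hn : 2 ≤ n) (hc : 0 < c) :
    ∫ t in Set.Ioi c, (t ^ n)⁻¹ = c / ((n - 1) * c ^ n) := by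
  have hn1 : (1 : ℝ) < n := by exact_mod_cast hn
  have hne : (n : ℝ) - 1 ≠ 0 := (sub_pos.2 hn1).ne'
  rw [← setIntegral_congr_fun measurableSet_Ioi (rpow_neg_natCast_eqOn_Ioi hc),
    integral_Ioi_rpow_of_lt (neg_lt_neg hn1) hc, rpow_add_one hc.ne', rpow_neg hc.le, rpow_natCast,
    neg_add_eq_sub, ← neg_sub, neg_div_neg_eq]
  field_simp

lemma integrableOn_Ioi_sinc_pow (hn : 2 ≤ n) (hc : 0 < c) :
    IntegrableOn (fun t => sinc t ^ n) (Set.Ioi c) := by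
  have hcont : Continuous fun t => sinc t ^ n := by fun_prop
  refine Integrable.mono' (integrableOn_Ioi_inv_pow hn hc) hcont.aestronglyMeasurable ?_
  filter_upwards [ae_restrict_mem measurableSet_Ioi] with t ht
  exact abs_sinc_pow_le_inv_pow n (hc.trans ht)

lemma abs_integral_Ioi_sinc_pow_le (hn : 2 ≤ n) (hc : 0 < c) :
    |∫ t in Set.Ioi c, sinc t ^ n| ≤ c / ((n - 1) * c ^ n) := by
  rw [← integral_Ioi_inv_pow hn hc, ← norm_eq_abs]
  refine norm_integral_le_of_norm_le (integrableOn_Ioi_inv_pow hn hc) ?_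
  filter_upwards [ae_restrict_mem measurableSet_Ioi] with t ht
  exact abs_sinc_pow_le_inv_pow n (hc.trans ht)

lemma sqrt_mul_abs_integral_Ioi_pi_sinc_pow_le (hn : 2 ≤ n) :
    √n * |∫ t in Set.Ioi π, sinc t ^ n| ≤ 3 / 2 * π / π ^ n := by
  have hn2 : (2 : ℝ) ≤ n := by exact_mod_cast hn
  have hsqrt : √n ≤ 3 / 2 * (n - 1) := by
    rw [sqrt_le_left (by linarith)]
    nlinarith
  have hn1 : (0 : ℝ) < n - 1 := by linarith
  calc √n * |∫ t in Set.Ioi π, sinc t ^ n|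
      ≤ 3 / 2 * (n - 1) * (π / ((n - 1) * π ^ n)) := by
        gcongr
        exact abs_integral_Ioi_sinc_pow_le hn pi_pos
    _ = 3 / 2 * π / π ^ n := by field_simp

end Tail

section Difference

variable {n : ℕ}

lemma I_eq_centralIntegral_add_tail (hn : 2 ≤ n) :
    I n = 2 / π * (centralIntegral n + √n * ∫ t in Set.Ioi π, sinc t ^ n) := by
  have hsinc : ∫ t in Set.Ioi (0 : ℝ), (sin t / t) ^ n = ∫ t in Set.Ioi (0 : ℝ), sinc t ^ n :=
    setIntegral_congr_fun measurableSet_Ioi fun t (ht : 0 < t) => by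
      simp only [sinc_of_ne_zero ht.ne']
  have hsplit := intervalIntegral.integral_interval_add_Ioi' (f := fun t => sinc t ^ n)
    ((continuous_sinc.pow n).intervalIntegrable 0 π) (integrableOn_Ioi_sinc_pow hn pi_pos)
  rw [I, hsinc, ← hsplit, ← sqrt_mul_integral_sinc_pow (by lia)]
  ring

lemma le_centralIntegral_succ_sub (hn : 0 < n) :
    √(6 * π) / 2 * (3 / (20 * n * (n + 1))) * (1 - 35 / (4 * n)) ≤
      centralIntegral (n + 1) - centralIntegral n := by
  have hgain : (0 : ℝ) ≤ 1 / n - 1 / (n + 1 : ℕ) := by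
    push_cast
    rw [sub_nonneg]
    gcongr
    simp
  calc √(6 * π) / 2 * (3 / (20 * n * (n + 1))) * (1 - 35 / (4 * n))
      = (1 / n - 1 / (n + 1 : ℕ)) / 180 * (27 / 2 * √(6 * π) * (1 - 35 / (4 * n))) := by
        push_cast
        field_simp
        ring
    _ ≤ (1 / n - 1 / (n + 1 : ℕ)) / 180 * ∫ s in (0)..(π * √n), s ^ 4 * sinc (s / √n) ^ n := by
        gcongr
        exact le_integral_pow_four_mul_sinc_div_sqrt_pow hn
    _ ≤ centralIntegral (n + 1) - centralIntegral n :=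
        le_sub_iff_add_le'.2 (centralIntegral_add_le hn n.le_succ)

lemma sqrt_six_mul_pi_div_pi : √(6 * π) / π = √(6 / π) := by
  rw [show 6 * π = 6 / π * π ^ 2 by field_simp, sqrt_mul (by positivity), sqrt_sq pi_nonneg,
    mul_div_cancel_right₀ _ pi_ne_zero]

lemma two_div_pi_mul_tail_bounds_le (n : ℕ) :
    2 / π * (3 / 2 * π / π ^ n + 3 / 2 * π / π ^ (n + 1)) ≤ 4 / π ^ n := by
  have hpi : 1 / π ≤ 1 / 3 := one_div_le_one_div_of_le three_pos pi_gt_three.le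
  calc 2 / π * (3 / 2 * π / π ^ n + 3 / 2 * π / π ^ (n + 1)) = 3 * (1 + 1 / π) / π ^ n := by
        field_simp
        ring
    _ ≤ 4 / π ^ n := by
        gcongr
        linarith

theorem le_I_succ_sub_I (hn : 2 ≤ n) :
    √(6 / π) * (3 / (20 * n * (n + 1))) * (1 - 35 / (4 * n)) - 4 / π ^ n ≤ I (n + 1) - I n := by
  have hcentral := le_centralIntegral_succ_sub (n := n) (by lia)
  have htail := sqrt_mul_abs_integral_Ioi_pi_sinc_pow_le hn
  have htail_succ := sqrt_mul_abs_integral_Ioi_pi_sinc_pow_le (n := n + 1) (by lia)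
  rw [← abs_of_nonneg (sqrt_nonneg _), ← abs_mul] at htail htail_succ
  have hmain : √(6 / π) * (3 / (20 * n * (n + 1))) * (1 - 35 / (4 * n)) =
      2 / π * (√(6 * π) / 2 * (3 / (20 * n * (n + 1))) * (1 - 35 / (4 * n))) := by
    rw [← sqrt_six_mul_pi_div_pi]
    ring
  calc √(6 / π) * (3 / (20 * n * (n + 1))) * (1 - 35 / (4 * n)) - 4 / π ^ n
      ≤ 2 / π * (√(6 * π) / 2 * (3 / (20 * n * (n + 1))) * (1 - 35 / (4 * n)) -
          (3 / 2 * π / π ^ n + 3 / 2 * π / π ^ (n + 1))) := by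
        rw [mul_sub (2 / π), hmain]
        exact sub_le_sub_left (two_div_pi_mul_tail_bounds_le n) _
    _ ≤ I (n + 1) - I n := by
        rw [I_eq_centralIntegral_add_tail hn, I_eq_centralIntegral_add_tail (n := n + 1) (by lia),
          ← mul_sub]
        refine mul_le_mul_of_nonneg_left ?_ (by positivity)
        linarith [le_of_abs_le htail, neg_le_of_abs_le htail_succ]

lemma second_order_term_le (hn : 0 < n) :
    √(6 / π) * (3 / (20 * n * (n + 1))) * (35 / (4 * n)) ≤ 147 / (80 * (n ^ 2 * (n + 1))) := by
  have hsqrt : √(6 / π) ≤ 7 / 5 := by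
    rw [sqrt_le_left (by norm_num), div_le_iff₀ pi_pos]
    linarith [pi_gt_d2]
  calc √(6 / π) * (3 / (20 * n * (n + 1))) * (35 / (4 * n))
      ≤ 7 / 5 * (3 / (20 * n * (n + 1))) * (35 / (4 * n)) := by gcongr
    _ = 147 / (80 * (n ^ 2 * (n + 1))) := by
        field_simp
        norm_num

lemma inv_sq_mul_succ_le (hn : 16 ≤ n) :
    147 / (80 * ((n : ℝ) ^ 2 * (n + 1))) ≤ 0.50344 * (n : ℝ) ^ (-(5 : ℝ) / 2) := by
  have hn0 : (0 : ℝ) < n := by positivity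
  have hrpow : (n : ℝ) ^ (-(5 : ℝ) / 2) = 1 / (n ^ 2 * √n) := by
    rw [show -(5 : ℝ) / 2 = -(2 + 1 / 2) by norm_num, rpow_neg hn0.le, rpow_add hn0,
      ← sqrt_eq_rpow, rpow_ofNat, one_div]
  have hsqrt : 4 ≤ √n := le_sqrt_of_sq_le (by norm_num; exact_mod_cast hn)
  have hsucc : 4 * √n ≤ n + 1 := by nlinarith [sq_sqrt hn0.le]
  rw [hrpow]
  calc 147 / (80 * ((n : ℝ) ^ 2 * (n + 1))) ≤ 147 / (80 * (n ^ 2 * (4 * √n))) := by gcongr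
    _ = 147 / 320 * (1 / (n ^ 2 * √n)) := by
        field_simp
        norm_num
    _ ≤ 0.50344 * (1 / (n ^ 2 * √n)) := by
        gcongr
        norm_num

lemma error_terms_lt (hn : 2 ≤ n) :
    √(6 / π) * (3 / (20 * n * (n + 1))) * (35 / (4 * n)) + 4 / π ^ n <
      4 * (1.1 : ℝ) ^ (-(n : ℤ)) + 0.50344 * (n : ℝ) ^ (-(5 : ℝ) / 2) := by
  have hsecond := second_order_term_le (n := n) (by lia)
  have hpos : 0 < (n : ℝ) ^ (-(5 : ℝ) / 2) := by positivity
  rw [zpow_neg, zpow_natCast, ← div_eq_mul_inv]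
  rcases lt_or_ge n 16 with hn16 | hn16
  · have hn2 : (2 : ℝ) ≤ n := by exact_mod_cast hn
    have hsmall : 147 / (80 * ((n : ℝ) ^ 2 * (n + 1))) ≤ 147 / (80 * (2 ^ 2 * (2 + 1))) := by
      gcongr
    have hpi : 4 / π ^ n ≤ 4 / 3 ^ 2 := by
      gcongr
      calc (3 : ℝ) ^ 2 ≤ π ^ 2 := by gcongr; exact pi_gt_three.le
        _ ≤ π ^ n := pow_le_pow_right₀ (by linarith [pi_gt_three]) hn
    have hpow : 4 / (1.1 : ℝ) ^ 16 ≤ 4 / 1.1 ^ n := by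
      gcongr
      norm_num
    linarith
  · have hpi : 4 / π ^ n < 4 / 1.1 ^ n := by
      gcongr
      linarith [pi_gt_three]
    linarith [inv_sq_mul_succ_le hn16]

end Difference

theorem I_succ_sub_I_gt_general (n : ℕ) (hn : 2 ≤ n) :
    I (n + 1) - I n >
      √(6 / π) * (3 / (20 * (n : ℝ) * ((n : ℝ) + 1)))
        - 4 * (1.1 : ℝ) ^ (-(n : ℤ))
        - 0.50344 * (n : ℝ) ^ (-(5 : ℝ) / 2) := by
  linarith [le_I_succ_sub_I hn, error_terms_lt hn]

/-- Explicit lower bound for `I (n+1) - I n` for `n ≥ 3`. -/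
theorem I_succ_sub_I_gt (n : ℕ) (hn : 3 ≤ n) :
    I (n + 1) - I n >
      Real.sqrt (6 / Real.pi) * (3 / (20 * (n : ℝ) * ((n : ℝ) + 1)))
        - 4 * (1.1 : ℝ) ^ (-(n : ℤ))
        - 0.50344 * (n : ℝ) ^ (-(5 : ℝ) / 2)
        - 10 * Real.exp (-(n : ℝ) / 6) := by
  linarith [I_succ_sub_I_gt_general n (by lia), exp_pos (-(n : ℝ) / 6)]
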